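/- Let T be a tree on n vertices with maximum degree Δ, where 2 < Δ < n − 1. Then T ⪯ CP_{n;1,Δ−1}, and r(T) = r(CP_{n;1,Δ−1}) if and only if T is isomorphic to CP_{n;1,Δ−1}. -/

import Mathlib

namespace TreeOrder

attribute [local instance] Classical.propDecidable

variable {V : Type*} {W : Type*}

/-- `side G u v` = number of vertices strictly closer to `u` than to `v`;
for an edge `uv` of a tree this is the order of the component of `T - uv` containing `u`. -/
noncomputable def side [Fintype V] (G : SimpleGraph V) (u v : V) : ℕ :=
  (Finset.univ.filter fun w => G.dist w u < G.dist w v).card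

/-- `mu G u v = min (n_u(e), n_v(e))` for the edge `e = uv`. -/
noncomputable def mu [Fintype V] (G : SimpleGraph V) (u v : V) : ℕ :=
  min (side G u v) (side G v u)

/-- `mu` as a function on unordered pairs. -/
noncomputable def muE [Fintype V] (G : SimpleGraph V) : Sym2 V → ℕ :=
  Sym2.lift ⟨fun u v => mu G u v, fun _ _ => min_comm _ _⟩

/-- `r G i` = number of edges `e` of `G` with `μ(e) = i`. -/
noncomputable def r [Fintype V] (G : SimpleGraph V) (i : ℕ) : ℕ :=
  (Finset.univ.filter fun e : Sym2 V => e ∈ G.edgeSet ∧ muE G e = i).card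

/-- `tailSum G n k = Σ_{i=k}^{⌊n/2⌋} r_i(G)`. -/
noncomputable def tailSum [Fintype V] (G : SimpleGraph V) (n k : ℕ) : ℕ :=
  ∑ i ∈ Finset.Icc k (n / 2), r G i

/-- The order `⪯` on trees with `n` vertices, via edge division vectors. -/
def Preceq [Fintype V] [Fintype W] (n : ℕ) (G : SimpleGraph V) (H : SimpleGraph W) : Prop :=
  ∀ k, 1 ≤ k → k ≤ n / 2 → tailSum G n k ≤ tailSum H n k

/-- The strict order `≺`. -/
def Prec [Fintype V] [Fintype W] (n : ℕ) (G : SimpleGraph V) (H : SimpleGraph W) : Prop :=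
  Preceq n G H ∧ ∃ k, 1 ≤ k ∧ k ≤ n / 2 ∧ tailSum G n k < tailSum H n k

/-- Equality of edge division vectors `r(G) = r(H)`. -/
def SameEdgeDivision [Fintype V] [Fintype W] (n : ℕ) (G : SimpleGraph V)
    (H : SimpleGraph W) : Prop :=
  ∀ i, 1 ≤ i → i ≤ n / 2 → r G i = r H i

/-- `u` is a centroidal vertex: `n_u(e) ≥ n/2` for every edge `e` incident to `u`. -/
def IsCentroidal [Fintype V] (G : SimpleGraph V) (u : V) : Prop :=
  ∀ v, G.Adj u v → Fintype.card V ≤ 2 * side G u v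

/-- `u` is a proper centroidal vertex: `n_u(e) > ⌈n/2⌉` for every edge `e` incident to `u`. -/
def IsProperCentroidal [Fintype V] (G : SimpleGraph V) (u : V) : Prop :=
  ∀ v, G.Adj u v → (Fintype.card V + 1) / 2 < side G u v

/-- The edge `uv` is a center edge: `μ(uv) = ⌊n/2⌋`. -/
def IsCenterEdge [Fintype V] (G : SimpleGraph V) (u v : V) : Prop :=
  G.Adj u v ∧ mu G u v = Fintype.card V / 2

/-- degree of a vertex -/
noncomputable def deg [Fintype V] (G : SimpleGraph V) (v : V) : ℕ :=
  (Finset.univ.filter fun w => G.Adj v w).card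

/-- The path `P_n` on `n` vertices. -/
def pathG (n : ℕ) : SimpleGraph (Fin n) :=
  SimpleGraph.fromRel fun x y => (x : ℕ) + 1 = y

/-- The star `S_n` on `n` vertices. -/
def starG (n : ℕ) : SimpleGraph (Fin n) :=
  SimpleGraph.fromRel fun x _ => (x : ℕ) = 0

/-- The double star path `CP_{n;a,b}` : a path on `n - a - b` vertices (at positions
`a, …, n - b - 1`) with `a` pendent vertices attached to its first vertex and `b`
pendent vertices attached to its last vertex. -/
def doubleStar (n a b : ℕ) : SimpleGraph (Fin n) :=
  SimpleGraph.fromRel fun x y =>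
    ((x : ℕ) < a ∧ (y : ℕ) = a) ∨
    (a ≤ (x : ℕ) ∧ (x : ℕ) + 1 = y ∧ (y : ℕ) < n - b) ∨
    ((x : ℕ) = n - b - 1 ∧ n - b ≤ (y : ℕ))

/-- `CP_{n,k}^s` : a path `v_1 ⋯ v_k` (at positions `0, …, k-1`) with all
`n - k` pendent vertices attached to `v_s` (position `s - 1`). -/
def cpOne (n k s : ℕ) : SimpleGraph (Fin n) :=
  SimpleGraph.fromRel fun x y =>
    ((x : ℕ) + 1 = y ∧ (y : ℕ) < k) ∨ ((x : ℕ) = s - 1 ∧ k ≤ (y : ℕ))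

/-- The caterpillar `CP(n; n_1, …, n_k)` : a path `v_1 ⋯ v_k` (at positions `0, …, k-1`),
where pendent vertex `j` (for `k ≤ j < n`) is attached to the path vertex at
position `f j` (so `n_i = |{j : f j = i - 1}|`). -/
def caterpillar (n k : ℕ) (f : ℕ → ℕ) : SimpleGraph (Fin n) :=
  SimpleGraph.fromRel fun x y =>
    ((x : ℕ) + 1 = y ∧ (y : ℕ) < k) ∨ (k ≤ (y : ℕ) ∧ (x : ℕ) = f y)

/-- The balanced starlike tree `SP_{n,q}` : the center is vertex `0`, and vertex
`j ≥ 1` lies on branch `(j - 1) % q` at depth `(j - 1)/q + 1`; so the `q` branches are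
paths whose orders pairwise differ by at most `1`. -/
def balancedStar (n q : ℕ) : SimpleGraph (Fin n) :=
  SimpleGraph.fromRel fun x y =>
    ((x : ℕ) = 0 ∧ 1 ≤ (y : ℕ) ∧ (y : ℕ) ≤ q) ∨ (1 ≤ (x : ℕ) ∧ (x : ℕ) + q = y)

/-- The edge-moving transformation of `G` w.r.t. the edge `uv`: contract `uv` to `u`
(moving all edges at `v` to `u`) and attach `v` to `u` as a pendent vertex. -/
def edgeMove (G : SimpleGraph V) (u v : V) : SimpleGraph V :=
  SimpleGraph.fromRel fun x y =>
    (G.Adj x y ∧ x ≠ v ∧ y ≠ v) ∨ (x = u ∧ y = v) ∨ (x = u ∧ G.Adj v y ∧ y ≠ u)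

/-!
Root `T` at a vertex `v` of degree `Δ`. Edges correspond to the non-root vertices `w`, and the edge
above `w` has `μ = min (|D w|, n - |D w|)`, where `D w` is the set of descendants of `w`; so the
tail sum from `k` on counts the *heavy* vertices, those with `k ≤ |D w| ≤ n - k`; the other vertices
are *light*. Every heavy `w` has at least `k - 1` light descendants, since a minimal heavy vertex
below `w` has only light ones below it. Outside `D t`, for a heavy `t` with `|D t|` maximal, there
are at least `k` light vertices, and for `k ≥ 2` every branch at the root contains a light leaf.
Hence for `k ≥ 2` there are at most `n + 1 - 2k` and at most `n + 1 - k - Δ` heavy vertices, and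
`CP_{n;1,Δ-1}` attains the smaller of these two bounds.

If the edge division vectors agree, then `r₁ = Δ` forces every branch at the root to contain exactly
one leaf, so every branch is a path. A path with more than one vertex contains a vertex with exactly
two descendants, so `r₂ ≤ 1` leaves at most one such branch.
-/

open Finset

lemma dist_lt_length_of_boundary {G : SimpleGraph V} {S : Set V} {a b u : V}
    (hS : ∀ x y, G.Adj x y → x ∈ S → y ∉ S → x = u) (q : G.Walk a b) (ha : a ∈ S) (hb : b ∉ S) :
    G.dist a u < q.length := by
  obtain ⟨e, he, hfst, hsnd⟩ := q.exists_boundary_dart S ha hb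
  obtain rfl := hS _ _ e.adj hfst hsnd
  have hmem := q.dart_fst_mem_support_of_mem_darts he
  exact (SimpleGraph.dist_le (q.takeUntil _ hmem)).trans_lt
    (SimpleGraph.Walk.length_takeUntil_lt_length hmem fun h => hb (h ▸ hfst))

section Descendants

variable [Fintype V] {p : V → V} {x y z : V}

/-- The vertices that reach `x` by iterating `p`: the subtree below `x`, including `x` itself, when
`p` is the parent map of a rooted tree. -/
noncomputable def descendants (p : V → V) (x : V) : Finset V :=
  univ.filter fun y => ∃ i, p^[i] y = x

/-- The children of `x` in a rooted tree with parent map `p`. A root is encoded as a fixed point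
of `p`, so it has to be excluded from its own children. -/
noncomputable def children (p : V → V) (x : V) : Finset V :=
  univ.filter fun y => y ≠ x ∧ p y = x

lemma mem_descendants : y ∈ descendants p x ↔ ∃ i, p^[i] y = x := by
  simp [descendants]

lemma mem_children : y ∈ children p x ↔ y ≠ x ∧ p y = x := by
  simp [children]

lemma mem_descendants_self (x : V) : x ∈ descendants p x :=
  mem_descendants.2 ⟨0, rfl⟩

lemma mem_descendants_parent (x : V) : x ∈ descendants p (p x) :=
  mem_descendants.2 ⟨1, rfl⟩

lemma mem_descendants_of_mem_children (hy : y ∈ children p x) : y ∈ descendants p x :=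
  (mem_children.1 hy).2 ▸ mem_descendants_parent y

lemma descendants_subset (hy : y ∈ descendants p x) : descendants p y ⊆ descendants p x := by
  intro z hz
  obtain ⟨i, rfl⟩ := mem_descendants.1 hy
  obtain ⟨j, rfl⟩ := mem_descendants.1 hz
  exact mem_descendants.2 ⟨i + j, Function.iterate_add_apply p i j z⟩

lemma parent_mem_descendants (hy : y ∈ descendants p x) (hyx : y ≠ x) :
    p y ∈ descendants p x := by
  obtain ⟨_ | i, hi⟩ := mem_descendants.1 hy
  · exact absurd hi hyx
  · exact mem_descendants.2 ⟨i, hi⟩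

lemma mem_descendants_or_mem_descendants (hx : z ∈ descendants p x) (hy : z ∈ descendants p y) :
    x ∈ descendants p y ∨ y ∈ descendants p x := by
  obtain ⟨i, rfl⟩ := mem_descendants.1 hx
  obtain ⟨j, rfl⟩ := mem_descendants.1 hy
  have iterate_mem {i j : ℕ} (hij : i ≤ j) : p^[i] z ∈ descendants p (p^[j] z) :=
    mem_descendants.2 ⟨j - i, by rw [← Function.iterate_add_apply, Nat.sub_add_cancel hij]⟩
  exact (le_total i j).imp iterate_mem iterate_mem

lemma disjoint_descendants (hxy : x ∉ descendants p y) (hyx : y ∉ descendants p x) :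
    Disjoint (descendants p x) (descendants p y) :=
  disjoint_left.2 fun _ hx hy =>
    (mem_descendants_or_mem_descendants hx hy).elim hxy hyx

lemma exists_mem_children_of_mem_descendants (hy : y ∈ descendants p x) (hyx : y ≠ x) :
    ∃ c ∈ children p x, y ∈ descendants p c := by
  obtain ⟨i, hi⟩ := mem_descendants.1 hy
  induction i generalizing y with
  | zero => exact absurd hi hyx
  | succ i ih =>
    by_cases hpy : p y = x
    · exact ⟨y, mem_children.2 ⟨hyx, hpy⟩, mem_descendants_self y⟩
    · obtain ⟨c, hc, hyc⟩ := ih (mem_descendants.2 ⟨i, hi⟩) hpy hi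
      exact ⟨c, hc, descendants_subset hyc (mem_descendants_parent y)⟩

lemma card_descendants_pos (x : V) : 0 < #(descendants p x) :=
  card_pos.2 ⟨x, mem_descendants_self x⟩

lemma card_descendants_eq_one : #(descendants p x) = 1 ↔ descendants p x = {x} := by
  refine ⟨fun h => ?_, fun h => h ▸ card_singleton x⟩
  exact (eq_of_subset_of_card_le (singleton_subset_iff.2 (mem_descendants_self x)) h.le).symm

end Descendants

/-- `G` is a tree with root `ρ` in which `p` maps every vertex to its parent and `d` is the
distance to the root. The root is its own parent. -/
structure IsRooting (G : SimpleGraph V) (ρ : V) (p : V → V) (d : V → ℕ) : Prop where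
  adj_iff : ∀ x y, G.Adj x y ↔ x ≠ y ∧ (p x = y ∨ p y = x)
  parent_root : p ρ = ρ
  depth_root : d ρ = 0
  depth_parent : ∀ x, x ≠ ρ → d (p x) + 1 = d x

lemma exists_isRooting {G : SimpleGraph V} (hT : G.IsTree) (ρ : V) :
    ∃ p d, IsRooting G ρ p d := by
  choose f hf hf_unique using (hT.existsUnique_path · ρ)
  have not_nil {x : V} (hx : x ≠ ρ) : ¬ (f x).Nil := SimpleGraph.Walk.not_nil_of_ne hx
  have root_nil : f ρ = .nil := (hf_unique ρ .nil .nil).symm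
  have adj_parent {x : V} (hx : x ≠ ρ) : G.Adj x (f x).snd :=
    SimpleGraph.Walk.adj_snd (not_nil hx)
  have adj_of_parent {x y : V} (hxy : x ≠ y) (h : (f x).snd = y) : G.Adj x y := by
    refine h ▸ adj_parent ?_
    rintro rfl
    exact hxy (by simpa [root_nil] using h)
  refine ⟨fun x => (f x).snd, fun x => (f x).length, ⟨fun x y => ⟨fun hxy => ⟨hxy.ne, ?_⟩, ?_⟩,
    by simp [root_nil], by simp [root_nil], fun x hx => ?_⟩⟩
  · by_cases hy : y ∈ (f x).support
    · exact .inl (hT.isAcyclic.eq_snd_of_adj_start (hf x) hxy hy).symm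
    · rw [← hf_unique y (.cons hxy.symm (f x)) ((hf x).cons hy)]
      exact .inr (SimpleGraph.Walk.snd_cons _ _)
  · rintro ⟨hne, hx | hy⟩
    · exact adj_of_parent hne hx
    · exact (adj_of_parent hne.symm hy).symm
  · rw [← hf_unique _ (f x).tail (hf x).tail]
    exact SimpleGraph.Walk.length_tail_add_one (not_nil hx)

namespace IsRooting

section Basic

variable {G : SimpleGraph V} {ρ : V} {p : V → V} {d : V → ℕ} {x : V}

lemma parent_ne (h : IsRooting G ρ p d) (hx : x ≠ ρ) : p x ≠ x := by
  intro hpx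
  have := h.depth_parent x hx
  rw [hpx] at this
  omega

lemma adj_parent (h : IsRooting G ρ p d) (hx : x ≠ ρ) : G.Adj x (p x) :=
  (h.adj_iff x (p x)).2 ⟨(h.parent_ne hx).symm, .inl rfl⟩

lemma iterate_depth (h : IsRooting G ρ p d) (x : V) : p^[d x] x = ρ := by
  induction hd : d x generalizing x with
  | zero =>
    by_contra hx
    have := h.depth_parent x hx
    omega
  | succ m ih =>
    have hx : x ≠ ρ := by
      rintro rfl
      rw [h.depth_root] at hd
      omega
    have := h.depth_parent x hx
    exact ih (p x) (by omega)

lemma connected (h : IsRooting G ρ p d) : G.Connected := by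
  have reachable_root (x : V) : G.Reachable x ρ := by
    induction hd : d x using Nat.strong_induction_on generalizing x with
    | _ m ih =>
      by_cases hx : x = ρ
      · rw [hx]
      · have := h.depth_parent x hx
        exact (h.adj_parent hx).reachable.trans (ih _ (by omega) (p x) rfl)
  exact { preconnected := fun x y => (reachable_root x).trans (reachable_root y).symm
          nonempty := ⟨ρ⟩ }

lemma injOn_parentEdge (h : IsRooting G ρ p d) : Set.InjOn (fun x => s(x, p x)) {ρ}ᶜ := by
  intro x hx y hy hxy
  rcases Sym2.eq_iff.1 hxy with ⟨hxy, -⟩ | ⟨hx', hy'⟩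
  · exact hxy
  · have hdx := h.depth_parent x hx
    have hdy := h.depth_parent y hy
    rw [hy'] at hdx
    rw [← hx'] at hdy
    omega

lemma mem_edgeSet_iff (h : IsRooting G ρ p d) {e : Sym2 V} :
    e ∈ G.edgeSet ↔ ∃ x, x ≠ ρ ∧ s(x, p x) = e := by
  refine ⟨fun he => ?_, fun ⟨x, hx, hxe⟩ => hxe ▸ h.adj_parent hx⟩
  have ne_root {x : V} (hx : x ≠ p x) : x ≠ ρ := fun hxρ => hx (hxρ ▸ h.parent_root.symm)
  induction e using Sym2.ind with
  | _ x y =>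
    obtain ⟨hne, rfl | rfl⟩ := (h.adj_iff x y).1 he
    · exact ⟨x, ne_root hne, rfl⟩
    · exact ⟨y, ne_root hne.symm, Sym2.eq_swap⟩

lemma depth_parent_le (h : IsRooting G ρ p d) (x : V) : d (p x) ≤ d x := by
  by_cases hx : x = ρ
  · rw [hx, h.parent_root]
  · have := h.depth_parent x hx
    omega

end Basic

section Descendants

variable [Fintype V] {G : SimpleGraph V} {ρ : V} {p : V → V} {d : V → ℕ} {x y z : V}

lemma mem_descendants_root (h : IsRooting G ρ p d) (x : V) : x ∈ descendants p ρ :=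
  mem_descendants.2 ⟨d x, h.iterate_depth x⟩

lemma root_mem_descendants (h : IsRooting G ρ p d) : ρ ∈ descendants p x ↔ x = ρ := by
  refine ⟨fun hx => ?_, fun hx => hx ▸ mem_descendants_self x⟩
  obtain ⟨i, hi⟩ := mem_descendants.1 hx
  rw [← hi, Function.iterate_fixed h.parent_root]

lemma ne_root_of_mem_descendants (h : IsRooting G ρ p d) (hx : x ≠ ρ)
    (hy : y ∈ descendants p x) : y ≠ ρ := by
  rintro rfl
  exact hx (h.root_mem_descendants.1 hy)

lemma ne_root_of_mem_children (h : IsRooting G ρ p d) (hy : y ∈ children p x) : y ≠ ρ := by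
  obtain ⟨hyx, rfl⟩ := mem_children.1 hy
  rintro rfl
  exact hyx h.parent_root.symm

lemma depth_le_of_mem_descendants (h : IsRooting G ρ p d) (hy : y ∈ descendants p x) :
    d x ≤ d y := by
  obtain ⟨i, rfl⟩ := mem_descendants.1 hy
  induction i generalizing y with
  | zero => exact le_rfl
  | succ i ih => exact (ih (mem_descendants.2 ⟨i, rfl⟩)).trans (h.depth_parent_le y)

lemma depth_lt_of_mem_descendants (h : IsRooting G ρ p d) (hy : y ∈ descendants p x)
    (hyx : y ≠ x) : d x < d y := by
  have hyρ : y ≠ ρ := by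
    rintro rfl
    exact hyx (h.root_mem_descendants.1 hy).symm
  have hle := h.depth_le_of_mem_descendants (parent_mem_descendants hy hyx)
  have := h.depth_parent y hyρ
  omega

lemma notMem_descendants_of_mem_descendants (h : IsRooting G ρ p d) (hy : y ∈ descendants p x)
    (hyx : y ≠ x) : x ∉ descendants p y := fun hx =>
  (h.depth_lt_of_mem_descendants hy hyx).not_ge (h.depth_le_of_mem_descendants hx)

lemma parent_notMem_descendants (h : IsRooting G ρ p d) (hx : x ≠ ρ) :
    p x ∉ descendants p x :=
  h.notMem_descendants_of_mem_descendants (mem_descendants_parent x) (h.parent_ne hx).symm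

lemma card_descendants_lt (h : IsRooting G ρ p d) (hy : y ∈ descendants p x) (hyx : y ≠ x) :
    #(descendants p y) < #(descendants p x) :=
  card_lt_card <| (ssubset_iff_of_subset (descendants_subset hy)).2
    ⟨x, mem_descendants_self x, h.notMem_descendants_of_mem_descendants hy hyx⟩

lemma card_descendants_lt_card (h : IsRooting G ρ p d) (hx : x ≠ ρ) :
    #(descendants p x) < Fintype.card V :=
  card_lt_univ_of_notMem (mt h.root_mem_descendants.1 hx)

lemma eq_of_mem_children_of_mem_descendants (h : IsRooting G ρ p d) (hx : x ∈ children p z)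
    (hy : y ∈ children p z) {w : V} (hwx : w ∈ descendants p x) (hwy : w ∈ descendants p y) :
    x = y := by
  wlog hxy : x ∈ descendants p y generalizing x y
  · exact (this hy hx hwy hwx
      ((mem_descendants_or_mem_descendants hwx hwy).resolve_left hxy)).symm
  by_contra hne
  have hz : p y ∈ descendants p y := by
    rw [(mem_children.1 hy).2, ← (mem_children.1 hx).2]
    exact parent_mem_descendants hxy hne
  exact h.parent_notMem_descendants (h.ne_root_of_mem_children hy) hz

lemma exists_mem_children_root (h : IsRooting G ρ p d) (hx : x ≠ ρ) :
    ∃ c ∈ children p ρ, x ∈ descendants p c :=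
  exists_mem_children_of_mem_descendants (h.mem_descendants_root x) hx

lemma deg_root (h : IsRooting G ρ p d) : deg G ρ = #(children p ρ) := by
  unfold deg children
  congr 1
  ext x
  simp only [mem_filter, mem_univ, true_and, h.adj_iff, h.parent_root]
  exact ⟨fun ⟨hx, hx'⟩ => ⟨hx.symm, hx'.resolve_left hx⟩, fun ⟨hx, hx'⟩ => ⟨hx.symm, .inr hx'⟩⟩

lemma exists_leaf_mem_descendants (h : IsRooting G ρ p d) (x : V) :
    ∃ l ∈ descendants p x, #(descendants p l) = 1 := by
  obtain ⟨l, hl, hmax⟩ := exists_max_image (descendants p x) d ⟨x, mem_descendants_self x⟩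
  refine ⟨l, hl, card_descendants_eq_one.2 (eq_singleton_iff_unique_mem.2
    ⟨mem_descendants_self l, fun y hy => ?_⟩)⟩
  by_contra hne
  exact (h.depth_lt_of_mem_descendants hy hne).not_ge (hmax y (descendants_subset hl hy))

end Descendants

section Sides

variable [Fintype V] {G : SimpleGraph V} {ρ : V} {p : V → V} {d : V → ℕ} {w x y : V}

lemma eq_and_eq_parent_of_adj (h : IsRooting G ρ p d) (hxy : G.Adj x y)
    (hx : x ∈ descendants p w) (hy : y ∉ descendants p w) : x = w ∧ y = p w := by
  obtain ⟨-, rfl | rfl⟩ := (h.adj_iff x y).1 hxy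
  · by_cases hxw : x = w
    · exact ⟨hxw, by rw [hxw]⟩
    · exact absurd (parent_mem_descendants hx hxw) hy
  · exact absurd (descendants_subset hx (mem_descendants_parent y)) hy

lemma dist_lt_dist_parent (h : IsRooting G ρ p d) (hw : w ≠ ρ) (hy : y ∈ descendants p w) :
    G.dist y w < G.dist y (p w) := by
  obtain ⟨q, hq⟩ := h.connected.exists_walk_length_eq_dist y (p w)
  exact hq ▸ dist_lt_length_of_boundary (S := descendants p w)
    (fun _ _ hab ha hb => (h.eq_and_eq_parent_of_adj hab ha hb).1) q hy
    (h.parent_notMem_descendants hw)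

lemma dist_parent_lt_dist (h : IsRooting G ρ p d) (hy : y ∉ descendants p w) :
    G.dist y (p w) < G.dist y w := by
  obtain ⟨q, hq⟩ := h.connected.exists_walk_length_eq_dist y w
  exact hq ▸ dist_lt_length_of_boundary (S := (descendants p w : Set V)ᶜ)
    (fun _ _ hab ha hb => (h.eq_and_eq_parent_of_adj hab.symm (not_not.1 hb) ha).2) q hy
    (not_not.2 (mem_descendants_self w))

lemma side_self_parent (h : IsRooting G ρ p d) (hw : w ≠ ρ) :
    side G w (p w) = #(descendants p w) := by
  unfold side
  congr 1
  ext y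
  rw [mem_filter_univ]
  exact ⟨not_imp_not.1 fun hy => (h.dist_parent_lt_dist hy).not_gt, h.dist_lt_dist_parent hw⟩

lemma side_parent_self (h : IsRooting G ρ p d) (hw : w ≠ ρ) :
    side G (p w) w = Fintype.card V - #(descendants p w) := by
  rw [← card_compl]
  unfold side
  congr 1
  ext y
  rw [mem_filter_univ, mem_compl]
  exact ⟨fun hlt hy => hlt.not_gt (h.dist_lt_dist_parent hw hy), h.dist_parent_lt_dist⟩

lemma mu_self_parent (h : IsRooting G ρ p d) (hw : w ≠ ρ) :
    mu G w (p w) = min #(descendants p w) (Fintype.card V - #(descendants p w)) := by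
  rw [mu, h.side_self_parent hw, h.side_parent_self hw]

end Sides

end IsRooting

/-- The non-root vertices `w` whose parent edge splits the tree into two parts of order at
least `k`. -/
noncomputable def heavy [Fintype V] (ρ : V) (p : V → V) (k : ℕ) : Finset V :=
  univ.filter fun w =>
    w ≠ ρ ∧ k ≤ #(descendants p w) ∧ #(descendants p w) + k ≤ Fintype.card V

/-- The non-root vertices whose parent edge `e` satisfies `μ(e) = i`. -/
noncomputable def muClass [Fintype V] (ρ : V) (p : V → V) (i : ℕ) : Finset V :=
  univ.filter fun w =>
    w ≠ ρ ∧ min #(descendants p w) (Fintype.card V - #(descendants p w)) = i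

/-- The non-root vertices with exactly `m` descendants. -/
noncomputable def sizeClass [Fintype V] (ρ : V) (p : V → V) (m : ℕ) : Finset V :=
  univ.filter fun w => w ≠ ρ ∧ #(descendants p w) = m

section EdgeClasses

variable [Fintype V] {ρ x : V} {p : V → V} {i k m : ℕ}

lemma mem_heavy : x ∈ heavy ρ p k ↔
    x ≠ ρ ∧ k ≤ #(descendants p x) ∧ #(descendants p x) + k ≤ Fintype.card V := by
  simp [heavy]

lemma mem_muClass : x ∈ muClass ρ p i ↔
    x ≠ ρ ∧ min #(descendants p x) (Fintype.card V - #(descendants p x)) = i := by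
  simp [muClass]

lemma mem_sizeClass : x ∈ sizeClass ρ p m ↔ x ≠ ρ ∧ #(descendants p x) = m := by
  simp [sizeClass]

end EdgeClasses

namespace IsRooting

section EdgeDivision

variable [Fintype V] {G : SimpleGraph V} {ρ : V} {p : V → V} {d : V → ℕ} {m : ℕ}

lemma r_eq (h : IsRooting G ρ p d) (i : ℕ) : r G i = #(muClass ρ p i) := by
  symm
  refine card_nbij (fun w => s(w, p w)) (fun w hw => ?_)
    (h.injOn_parentEdge.mono fun w hw => (mem_muClass.1 hw).1) fun e he => ?_
  · obtain ⟨hw, hi⟩ := mem_muClass.1 hw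
    exact (mem_filter_univ _).2 ⟨h.adj_parent hw, (h.mu_self_parent hw).trans hi⟩
  · obtain ⟨he, hi⟩ := (mem_filter_univ e).1 he
    obtain ⟨w, hw, rfl⟩ := h.mem_edgeSet_iff.1 he
    exact ⟨w, mem_muClass.2 ⟨hw, (h.mu_self_parent hw).symm.trans hi⟩, rfl⟩

lemma tailSum_eq (h : IsRooting G ρ p d) (k : ℕ) :
    tailSum G (Fintype.card V) k = #(heavy ρ p k) := by
  have maps_to : ∀ w ∈ heavy ρ p k,
      min #(descendants p w) (Fintype.card V - #(descendants p w)) ∈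
        Icc k (Fintype.card V / 2) := by
    intro w hw
    obtain ⟨-, hk, hkn⟩ := mem_heavy.1 hw
    rw [mem_Icc]
    omega
  rw [tailSum, card_eq_sum_card_fiberwise maps_to]
  refine sum_congr rfl fun i hi => ?_
  rw [h.r_eq]
  congr 1
  ext w
  have hki := (mem_Icc.1 hi).1
  have hwn := card_le_univ (descendants p w)
  rw [mem_filter, mem_heavy, mem_muClass]
  constructor
  · rintro ⟨hw, rfl⟩
    exact ⟨⟨hw, by omega, by omega⟩, rfl⟩
  · rintro ⟨⟨hw, -⟩, hwi⟩
    exact ⟨hw, hwi⟩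

lemma card_sizeClass_le_r (h : IsRooting G ρ p d) (hm : 2 * m ≤ Fintype.card V) :
    #(sizeClass ρ p m) ≤ r G m := by
  rw [h.r_eq]
  refine card_le_card fun w hw => ?_
  obtain ⟨hw, hwm⟩ := mem_sizeClass.1 hw
  exact mem_muClass.2 ⟨hw, by omega⟩

end EdgeDivision

section LightVertices

variable [Fintype V] {G : SimpleGraph V} {ρ : V} {p : V → V} {d : V → ℕ} {k : ℕ} {x t : V}

lemma le_card_descendants_sdiff_heavy (h : IsRooting G ρ p d) (hx : x ∈ heavy ρ p k) :
    k ≤ #(descendants p x \ heavy ρ p k) + 1 := by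
  obtain ⟨w, hw, hmin⟩ := exists_min_image (descendants p x ∩ heavy ρ p k)
    (fun w => #(descendants p w)) ⟨x, mem_inter.2 ⟨mem_descendants_self x, hx⟩⟩
  obtain ⟨hwx, hw⟩ := mem_inter.1 hw
  have hsub : (descendants p w).erase w ⊆ descendants p x \ heavy ρ p k := by
    intro y hy
    obtain ⟨hyw, hy⟩ := mem_erase.1 hy
    have hyx := descendants_subset hwx hy
    exact mem_sdiff.2 ⟨hyx, fun hyk =>
      (h.card_descendants_lt hy hyw).not_ge (hmin y (mem_inter.2 ⟨hyx, hyk⟩))⟩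
  calc k ≤ #(descendants p w) := (mem_heavy.1 hw).2.1
    _ = #((descendants p w).erase w) + 1 := (card_erase_add_one (mem_descendants_self w)).symm
    _ ≤ #(descendants p x \ heavy ρ p k) + 1 := Nat.add_le_add_right (card_le_card hsub) 1

lemma le_card_compl_descendants_sdiff_heavy (h : IsRooting G ρ p d) (ht : t ∈ heavy ρ p k)
    (hmax : ∀ y ∈ heavy ρ p k, #(descendants p y) ≤ #(descendants p t)) :
    k ≤ #((descendants p t)ᶜ \ heavy ρ p k) := by
  obtain ⟨htρ, -, htk⟩ := mem_heavy.1 ht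
  by_cases hsub : heavy ρ p k ⊆ descendants p t
  · rw [sdiff_eq_self_of_disjoint (disjoint_left.2 fun y hy hyk => mem_compl.1 hy (hsub hyk)),
      card_compl]
    omega
  obtain ⟨y, hy, hyt⟩ := not_subset.1 hsub
  have hyρ := (mem_heavy.1 hy).1
  have hty : t ∉ descendants p y := fun hty =>
    (h.card_descendants_lt hty (ne_of_mem_of_not_mem (mem_descendants_self t) hyt)).not_ge
      (hmax y hy)
  have hρ : ρ ∉ descendants p y \ heavy ρ p k := fun hρ =>
    hyρ (h.root_mem_descendants.1 (mem_sdiff.1 hρ).1)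
  have hsub : insert ρ (descendants p y \ heavy ρ p k) ⊆ (descendants p t)ᶜ \ heavy ρ p k := by
    refine insert_subset (mem_sdiff.2 ⟨?_, fun hρ => (mem_heavy.1 hρ).1 rfl⟩)
      (sdiff_subset_sdiff ?_ le_rfl)
    · exact mem_compl.2 (mt h.root_mem_descendants.1 htρ)
    · exact subset_compl_iff_disjoint_right.2 (disjoint_descendants hyt hty)
  calc k ≤ #(descendants p y \ heavy ρ p k) + 1 := h.le_card_descendants_sdiff_heavy hy
    _ = #(insert ρ (descendants p y \ heavy ρ p k)) := (card_insert_of_notMem hρ).symm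
    _ ≤ #((descendants p t)ᶜ \ heavy ρ p k) := card_le_card hsub

lemma card_heavy_add_two_mul_le (h : IsRooting G ρ p d) (hne : (heavy ρ p k).Nonempty) :
    #(heavy ρ p k) + 2 * k ≤ Fintype.card V + 1 := by
  obtain ⟨t, ht, hmax⟩ := exists_max_image _ (fun w => #(descendants p w)) hne
  have hin := h.le_card_descendants_sdiff_heavy ht
  have hout := h.le_card_compl_descendants_sdiff_heavy ht hmax
  have hlight : #(descendants p t \ heavy ρ p k) + #((descendants p t)ᶜ \ heavy ρ p k) =
      #(heavy ρ p k)ᶜ := by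
    rw [← card_union_of_disjoint (disjoint_compl_right.mono sdiff_subset sdiff_subset),
      ← union_sdiff_distrib, union_compl, compl_eq_univ_sdiff]
  have := card_add_card_compl (heavy ρ p k)
  omega

lemma sum_card_descendants_sdiff_lt (h : IsRooting G ρ p d) {S : Finset V} (hρ : ρ ∉ S) :
    ∑ c ∈ children p ρ, #(descendants p c \ S) < #Sᶜ := by
  rw [← card_biUnion fun c hc c' hc' hne => disjoint_left.2 fun y hy hy' =>
    hne (h.eq_of_mem_children_of_mem_descendants hc hc' (mem_sdiff.1 hy).1 (mem_sdiff.1 hy').1)]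
  refine card_lt_card ((ssubset_iff_of_subset fun y hy => ?_).2 ⟨ρ, mem_compl.2 hρ, fun hρ => ?_⟩)
  · obtain ⟨c, -, hy⟩ := mem_biUnion.1 hy
    exact mem_compl.2 (mem_sdiff.1 hy).2
  · obtain ⟨c, hc, hρc⟩ := mem_biUnion.1 hρ
    exact h.ne_root_of_mem_children hc (h.root_mem_descendants.1 (mem_sdiff.1 hρc).1)

lemma card_heavy_add_card_children_le (h : IsRooting G ρ p d) (hk : 1 < k)
    (hne : (heavy ρ p k).Nonempty) :
    #(heavy ρ p k) + #(children p ρ) + k ≤ Fintype.card V + 1 := by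
  obtain ⟨w, hw⟩ := hne
  obtain ⟨c, hc, hwc⟩ := h.exists_mem_children_root (mem_heavy.1 hw).1
  have hbranch : k ≤ #(descendants p c \ heavy ρ p k) + 1 :=
    (h.le_card_descendants_sdiff_heavy hw).trans
      (Nat.add_le_add_right (card_le_card (sdiff_subset_sdiff (descendants_subset hwc) le_rfl)) 1)
  have hother : ∀ c' ∈ (children p ρ).erase c, 1 ≤ #(descendants p c' \ heavy ρ p k) := by
    intro c' _
    obtain ⟨l, hl, hleaf⟩ := h.exists_leaf_mem_descendants c'
    exact card_pos.2 ⟨l, mem_sdiff.2 ⟨hl, fun hlk => (hleaf ▸ hk).not_ge (mem_heavy.1 hlk).2.1⟩⟩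
  have hothers := card_nsmul_le_sum _ _ 1 hother
  have hsum := h.sum_card_descendants_sdiff_lt (S := heavy ρ p k) fun hρ => (mem_heavy.1 hρ).1 rfl
  rw [← add_sum_erase _ _ hc] at hsum
  have := card_erase_add_one hc
  have := card_add_card_compl (heavy ρ p k)
  rw [smul_eq_mul, mul_one] at hothers
  omega

lemma tailSum_one_add_one (h : IsRooting G ρ p d) :
    tailSum G (Fintype.card V) 1 + 1 = Fintype.card V := by
  have heavy_one : heavy ρ p 1 = univ.erase ρ := by
    ext x
    simp only [mem_heavy, mem_erase, mem_univ, and_true, and_iff_left_iff_imp]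
    exact fun hx => ⟨card_descendants_pos x, h.card_descendants_lt_card hx⟩
  rw [h.tailSum_eq, heavy_one, card_erase_add_one (mem_univ ρ), card_univ]

end LightVertices

end IsRooting

section Broom

variable {n b : ℕ} {c x : Fin n}

/-- The parent map of the tree with vertices `0, …, n - 1` in which `0, …, c` is a path with root
`c` and all vertices above `c` are children of `c`. -/
def broomParent (c x : Fin n) : Fin n :=
  if h : x < c then ⟨x + 1, by omega⟩ else c

lemma broomParent_of_lt (hx : x < c) : (broomParent c x : ℕ) = x + 1 := by
  simp [broomParent, hx]

lemma broomParent_of_le (hx : c ≤ x) : broomParent c x = c :=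
  dif_neg hx.not_gt

lemma broomParent_le (x : Fin n) : broomParent c x ≤ c := by
  rcases lt_or_ge x c with hx | hx
  · have := broomParent_of_lt hx
    omega
  · exact (broomParent_of_le hx).le

/-- The distance to the root `c` in the tree with parent map `broomParent c`. -/
def broomDepth (c x : Fin n) : ℕ :=
  if x ≤ c then c - x else 1

lemma exists_broomRoot (hb : b < n) : ∃ c : Fin n, (c : ℕ) + b + 1 = n :=
  ⟨⟨n - 1 - b, by omega⟩, by dsimp only; omega⟩

lemma isRooting_doubleStar (hc : (c : ℕ) + b + 1 = n) :
    IsRooting (doubleStar n 1 b) c (broomParent c) (broomDepth c) where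
  adj_iff x y := by
    simp only [doubleStar, SimpleGraph.fromRel_adj, and_congr_right_iff]
    intro hxy
    rcases lt_or_ge x c with hx | hx <;> rcases lt_or_ge y c with hy | hy <;>
      simp only [Fin.ext_iff, broomParent_of_lt, broomParent_of_le, hx, hy] <;> omega
  parent_root := broomParent_of_le le_rfl
  depth_root := by simp [broomDepth]
  depth_parent x hx := by
    rcases hx.lt_or_gt with hx | hx
    · have := broomParent_of_lt hx
      simp only [broomDepth]
      grind
    · simp [broomParent_of_le hx.le, broomDepth, hx.not_ge]

lemma broomParent_iterate (hx : x ≤ c) (i : ℕ) :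
    ((broomParent c)^[i] x : ℕ) = min (x + i) c := by
  induction i generalizing x with
  | zero => simpa using hx
  | succ i ih =>
    rw [Function.iterate_succ_apply]
    rcases hx.lt_or_eq with hx | rfl
    · have := broomParent_of_lt hx
      rw [ih (by omega), this]
      omega
    · rw [broomParent_of_le le_rfl, ih le_rfl]
      omega

lemma card_descendants_broomParent_of_lt (hx : x < c) :
    #(descendants (broomParent c) x) = x + 1 := by
  rw [← Fin.card_Iic]
  congr 1
  ext y
  rw [mem_descendants, mem_Iic]
  constructor
  · rintro ⟨i, rfl⟩
    rcases le_or_gt y c with hy | hy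
    · have := broomParent_iterate hy i
      omega
    · rcases i with _ | i
      · exact le_rfl
      · have := broomParent_iterate (le_refl c) i
        rw [Function.iterate_succ_apply, broomParent_of_le hy.le] at hx
        omega
  · intro hyx
    refine ⟨x - y, Fin.ext ?_⟩
    rw [broomParent_iterate (hyx.trans hx.le)]
    omega

lemma card_descendants_broomParent_of_gt (hx : c < x) :
    #(descendants (broomParent c) x) = 1 := by
  refine card_descendants_eq_one.2 (eq_singleton_iff_unique_mem.2
    ⟨mem_descendants_self x, fun y hy => ?_⟩)
  by_contra hyx
  obtain ⟨z, hz, -⟩ := exists_mem_children_of_mem_descendants hy hyx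
  exact (hx.trans_le ((mem_children.1 hz).2.symm.le.trans (broomParent_le z))).false

lemma le_tailSum_doubleStar (hc : (c : ℕ) + b + 1 = n) (k : ℕ) :
    min (c : ℕ) (n - k) - (k - 1) ≤ tailSum (doubleStar n 1 b) n k := by
  have htail := (isRooting_doubleStar hc).tailSum_eq k
  rw [Fintype.card_fin] at htail
  rw [htail, ← Nat.card_Ico]
  refine card_le_card_of_surjOn Fin.val fun i hi => ?_
  rw [coe_Ico, Set.mem_Ico] at hi
  have hic : (⟨i, by omega⟩ : Fin n) < c := Fin.lt_def.2 (by dsimp only; omega)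
  refine ⟨⟨i, by omega⟩, mem_heavy.2 ⟨hic.ne, ?_⟩, rfl⟩
  rw [card_descendants_broomParent_of_lt hic, Fintype.card_fin]
  dsimp only
  omega

lemma r_doubleStar_one_le (hc : (c : ℕ) + b + 1 = n) (hb : 1 ≤ b) :
    r (doubleStar n 1 b) 1 ≤ b + 1 := by
  rw [(isRooting_doubleStar hc).r_eq]
  calc _ ≤ #(insert ⟨0, by omega⟩ (Ioi c)) := card_le_card fun x hx => ?_
    _ ≤ #(Ioi c) + 1 := card_insert_le _ _
    _ = b + 1 := by rw [Fin.card_Ioi]; omega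
  obtain ⟨hxc, hx⟩ := mem_muClass.1 hx
  rw [Fintype.card_fin] at hx
  rcases hxc.lt_or_gt with hxc | hxc
  · rw [card_descendants_broomParent_of_lt hxc] at hx
    exact mem_insert.2 (.inl (Fin.ext (by dsimp only; omega)))
  · exact mem_insert_of_mem (mem_Ioi.2 hxc)

lemma r_doubleStar_two_le_one (hc : (c : ℕ) + b + 1 = n) (hb : 2 ≤ b) :
    r (doubleStar n 1 b) 2 ≤ 1 := by
  rw [(isRooting_doubleStar hc).r_eq]
  have val_eq_one {x : Fin n} (hx : x ∈ muClass c (broomParent c) 2) : (x : ℕ) = 1 := by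
    obtain ⟨hxc, hx⟩ := mem_muClass.1 hx
    rw [Fintype.card_fin] at hx
    rcases hxc.lt_or_gt with hxc | hxc
    · rw [card_descendants_broomParent_of_lt hxc] at hx
      omega
    · rw [card_descendants_broomParent_of_gt hxc] at hx
      omega
  exact card_le_one.2 fun x hx y hy => Fin.ext ((val_eq_one hx).trans (val_eq_one hy).symm)

end Broom

/-- The vertices on the path from `x` to the root, both included, in a rooted tree with parent
map `p`. -/
noncomputable def ancestors [Fintype V] (p : V → V) (x : V) : Finset V :=
  univ.filter fun y => x ∈ descendants p y

lemma mem_ancestors [Fintype V] {p : V → V} {x y : V} :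
    y ∈ ancestors p x ↔ x ∈ descendants p y := by
  simp [ancestors]

namespace IsRooting

section Spine

variable [Fintype V] {G : SimpleGraph V} {ρ : V} {p : V → V} {d : V → ℕ} {l : V}

lemma card_ancestors (h : IsRooting G ρ p d) (x : V) : #(ancestors p x) = d x + 1 := by
  induction hd : d x generalizing x with
  | zero =>
    have hx : x = ρ := by
      by_contra hx
      have := h.depth_parent x hx
      omega
    rw [card_eq_one]
    refine ⟨ρ, ext fun y => ?_⟩
    rw [mem_ancestors, mem_singleton, hx, h.root_mem_descendants]
  | succ m ih =>
    have hx : x ≠ ρ := by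
      rintro rfl
      rw [h.depth_root] at hd
      omega
    have hinsert : ancestors p x = insert x (ancestors p (p x)) := by
      ext y
      rw [mem_insert, mem_ancestors, mem_ancestors]
      refine ⟨fun hy => or_iff_not_imp_left.2 fun hyx => parent_mem_descendants hy (Ne.symm hyx),
        ?_⟩
      rintro (rfl | hy)
      · exact mem_descendants_self y
      · exact descendants_subset hy (mem_descendants_parent x)
    have hnot : x ∉ ancestors p (p x) := mt mem_ancestors.1 (h.parent_notMem_descendants hx)
    rw [hinsert, card_insert_of_notMem hnot, ih (p x) (by have := h.depth_parent x hx; omega)]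

lemma injOn_depth_ancestors (h : IsRooting G ρ p d) (x : V) :
    Set.InjOn d (ancestors p x) := by
  intro y hy z hz hyz
  by_contra hne
  rcases mem_descendants_or_mem_descendants (mem_ancestors.1 hy) (mem_ancestors.1 hz) with hy | hz
  · exact (h.depth_lt_of_mem_descendants hy hne).ne' hyz
  · exact (h.depth_lt_of_mem_descendants hz (Ne.symm hne)).ne hyz

lemma card_compl_ancestors (h : IsRooting G ρ p d) (hlρ : l ≠ ρ)
    (hl : ∀ x, l ∈ descendants p x ∨ p x = ρ) :
    #(ancestors p l)ᶜ + 1 = #(children p ρ) := by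
  obtain ⟨t, ht, hlt⟩ := h.exists_mem_children_root hlρ
  have hcompl : (ancestors p l)ᶜ = (children p ρ).erase t := by
    ext x
    rw [mem_compl, mem_ancestors, mem_erase]
    refine ⟨fun hx => ⟨fun hxt => hx (hxt ▸ hlt), mem_children.2 ⟨?_, (hl x).resolve_left hx⟩⟩,
      fun ⟨hxt, hxc⟩ hlx => hxt (h.eq_of_mem_children_of_mem_descendants hxc ht hlx hlt)⟩
    rintro rfl
    exact hx (h.mem_descendants_root l)
  rw [hcompl, card_erase_add_one ht]

lemma depth_add_card_children (h : IsRooting G ρ p d) (hlρ : l ≠ ρ)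
    (hl : ∀ x, l ∈ descendants p x ∨ p x = ρ) :
    d l + #(children p ρ) = Fintype.card V := by
  have := h.card_ancestors l
  have := h.card_compl_ancestors hlρ hl
  have := card_add_card_compl (ancestors p l)
  omega

end Spine

lemma nonempty_iso {G : SimpleGraph V} {H : SimpleGraph W} {ρ : V} {σ : W} {p : V → V} {q : W → W}
    {d : V → ℕ} {d' : W → ℕ} (hG : IsRooting G ρ p d) (hH : IsRooting H σ q d') {f : V → W}
    (hf : f.Bijective) (hpq : Function.Semiconj f p q) : Nonempty (G ≃g H) :=
  ⟨⟨Equiv.ofBijective f hf, fun {x y} => by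
    rw [hG.adj_iff, hH.adj_iff, Equiv.ofBijective_apply, Equiv.ofBijective_apply, ← hpq x, ← hpq y,
      hf.1.ne_iff, hf.1.eq_iff, hf.1.eq_iff]⟩⟩

section Equality

variable [Fintype V] {G : SimpleGraph V} {ρ : V} {p : V → V} {d : V → ℕ} {l x a a' : V}

lemma exists_broomLabelling (h : IsRooting G ρ p d) (l : V) :
    ∃ f : V → Fin (Fintype.card V), f.Injective ∧
      (∀ x ∈ ancestors p l, (f x : ℕ) = d l - d x) ∧ ∀ x ∉ ancestors p l, d l < f x := by
  have hA := h.card_ancestors l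
  have hdl : ∀ x ∈ ancestors p l, d x ≤ d l := fun x hx =>
    h.depth_le_of_mem_descendants (mem_ancestors.1 hx)
  have hd := h.injOn_depth_ancestors l
  set A := ancestors p l
  have hcard := card_add_card_compl A
  let f (x : V) : Fin (Fintype.card V) :=
    if hx : x ∈ A then ⟨d l - d x, by omega⟩
    else ⟨d l + 1 + Aᶜ.equivFin ⟨x, mem_compl.2 hx⟩, by omega⟩
  have hfA {x : V} (hx : x ∈ A) : (f x : ℕ) = d l - d x := by simp [f, hx]
  have hfAc {x : V} (hx : x ∉ A) : (f x : ℕ) = d l + 1 + Aᶜ.equivFin ⟨x, mem_compl.2 hx⟩ := by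
    simp [f, hx]
  refine ⟨f, fun x y hxy => ?_, fun x => hfA, fun x hx => by rw [hfAc hx]; omega⟩
  have hxy := congrArg Fin.val hxy
  by_cases hx : x ∈ A <;> by_cases hy : y ∈ A
  · rw [hfA hx, hfA hy] at hxy
    have := hdl x hx
    have := hdl y hy
    exact hd hx hy (by omega)
  · rw [hfA hx, hfAc hy] at hxy
    omega
  · rw [hfAc hx, hfA hy] at hxy
    omega
  · rw [hfAc hx, hfAc hy] at hxy
    exact congrArg Subtype.val (Aᶜ.equivFin.injective (Fin.ext (Nat.add_left_cancel hxy)))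

lemma nonempty_iso_doubleStar (h : IsRooting G ρ p d) (hlρ : l ≠ ρ)
    (hl : ∀ x, l ∈ descendants p x ∨ p x = ρ) :
    Nonempty (G ≃g doubleStar (Fintype.card V) 1 (#(children p ρ) - 1)) := by
  have hcard := h.depth_add_card_children hlρ hl
  have hcompl := h.card_compl_ancestors hlρ hl
  obtain ⟨f, hf, hfA, hfAc⟩ := h.exists_broomLabelling l
  let c : Fin (Fintype.card V) := ⟨d l, by omega⟩
  have hfρ : f ρ = c := by
    rw [Fin.ext_iff, hfA ρ (mem_ancestors.2 (h.mem_descendants_root l)), h.depth_root]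
    rfl
  refine h.nonempty_iso (isRooting_doubleStar (c := c) (by dsimp only [c]; omega))
    ((Fintype.bijective_iff_injective_and_card f).2 ⟨hf, by simp⟩) fun x => ?_
  by_cases hx : x ∈ ancestors p l
  · by_cases hxρ : x = ρ
    · rw [hxρ, h.parent_root, hfρ, broomParent_of_le le_rfl]
    have hpx : p x ∈ ancestors p l :=
      mem_ancestors.2 (descendants_subset (mem_descendants_parent x) (mem_ancestors.1 hx))
    have hdx := h.depth_parent x hxρ
    have hdl := h.depth_le_of_mem_descendants (mem_ancestors.1 hx)
    have hxc : f x < c := by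
      rw [Fin.lt_def, hfA x hx]
      dsimp only [c]
      omega
    rw [Fin.ext_iff, broomParent_of_lt hxc, hfA x hx, hfA _ hpx]
    omega
  · rw [(hl x).resolve_left (mt mem_ancestors.2 hx), hfρ, broomParent_of_le (hfAc x hx).le]

lemma eq_of_leaf_of_mem_descendants (h : IsRooting G ρ p d)
    (hleaves : #(sizeClass ρ p 1) ≤ #(children p ρ)) (hx : x ≠ ρ)
    (ha : #(descendants p a) = 1) (ha' : #(descendants p a') = 1)
    (hax : a ∈ descendants p x) (hax' : a' ∈ descendants p x) : a = a' := by
  choose! top htop hmem using fun y (hy : y ≠ ρ) => h.exists_mem_children_root hy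
  have htop_eq {c y : V} (hc : c ∈ children p ρ) (hy : y ∈ descendants p c) : top y = c :=
    have hyρ := h.ne_root_of_mem_descendants (h.ne_root_of_mem_children hc) hy
    h.eq_of_mem_children_of_mem_descendants (htop y hyρ) hc (hmem y hyρ) hy
  have htop_surj : Set.SurjOn top (sizeClass ρ p 1) (children p ρ) := by
    intro c hc
    obtain ⟨l, hlc, hl⟩ := h.exists_leaf_mem_descendants c
    have hlρ := h.ne_root_of_mem_descendants (h.ne_root_of_mem_children hc) hlc
    exact ⟨l, mem_sizeClass.2 ⟨hlρ, hl⟩, htop_eq hc hlc⟩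
  have htop_inj : Set.InjOn top (sizeClass ρ p 1) :=
    injOn_of_surjOn_of_card_le top (fun y hy => htop y (mem_sizeClass.1 hy).1) htop_surj hleaves
  refine htop_inj (mem_sizeClass.2 ⟨h.ne_root_of_mem_descendants hx hax, ha⟩)
    (mem_sizeClass.2 ⟨h.ne_root_of_mem_descendants hx hax', ha'⟩) ?_
  rw [htop_eq (htop x hx) (descendants_subset (hmem x hx) hax),
    htop_eq (htop x hx) (descendants_subset (hmem x hx) hax')]

lemma card_descendants_parent_leaf (h : IsRooting G ρ p d)
    (hleaves : #(sizeClass ρ p 1) ≤ #(children p ρ)) (ha : #(descendants p a) = 1)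
    (hpa : p a ≠ ρ) : #(descendants p (p a)) = 2 := by
  have haρ : a ≠ ρ := fun haρ => hpa (haρ ▸ h.parent_root)
  have ha_child : a ∈ children p (p a) := mem_children.2 ⟨(h.parent_ne haρ).symm, rfl⟩
  refine card_eq_two.2 ⟨p a, a, h.parent_ne haρ, ext fun y => ?_⟩
  rw [mem_insert, mem_singleton]
  refine ⟨fun hy => or_iff_not_imp_left.2 fun hyp => ?_, ?_⟩
  · obtain ⟨c, hc, hyc⟩ := exists_mem_children_of_mem_descendants hy hyp
    obtain ⟨l, hlc, hl⟩ := h.exists_leaf_mem_descendants c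
    have hla : l = a := h.eq_of_leaf_of_mem_descendants hleaves hpa hl ha
      (descendants_subset (mem_descendants_of_mem_children hc) hlc) (mem_descendants_parent a)
    have hca : c = a := h.eq_of_mem_children_of_mem_descendants hc ha_child (hla ▸ hlc)
      (mem_descendants_self a)
    rwa [hca, card_descendants_eq_one.1 ha, mem_singleton] at hyc
  · rintro (rfl | rfl)
    exacts [mem_descendants_self _, mem_descendants_parent _]

lemma exists_spine (h : IsRooting G ρ p d) (hne : (children p ρ).Nonempty)
    (hleaves : #(sizeClass ρ p 1) ≤ #(children p ρ)) (htwo : #(sizeClass ρ p 2) ≤ 1) :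
    ∃ l ≠ ρ, ∀ x, l ∈ descendants p x ∨ p x = ρ := by
  have eq_of_deep {a a' : V} (ha : #(descendants p a) = 1) (ha' : #(descendants p a') = 1)
      (hpa : p a ≠ ρ) (hpa' : p a' ≠ ρ) : a = a' := by
    have hpp : p a = p a' := card_le_one.1 htwo
      _ (mem_sizeClass.2 ⟨hpa, h.card_descendants_parent_leaf hleaves ha hpa⟩)
      _ (mem_sizeClass.2 ⟨hpa', h.card_descendants_parent_leaf hleaves ha' hpa'⟩)
    exact h.eq_of_leaf_of_mem_descendants hleaves hpa ha ha' (mem_descendants_parent a)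
      (hpp ▸ mem_descendants_parent a')
  obtain ⟨l, hlρ, hl⟩ : ∃ l ≠ ρ, ∀ a, #(descendants p a) = 1 → p a ≠ ρ → a = l := by
    by_cases hdeep : ∃ l, #(descendants p l) = 1 ∧ p l ≠ ρ
    · obtain ⟨l, hl, hpl⟩ := hdeep
      exact ⟨l, fun hlρ => hpl (hlρ ▸ h.parent_root), fun a ha hpa => eq_of_deep ha hl hpa hpl⟩
    · obtain ⟨c, hc⟩ := hne
      exact ⟨c, h.ne_root_of_mem_children hc, fun a ha hpa => absurd ⟨a, ha, hpa⟩ hdeep⟩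
  refine ⟨l, hlρ, fun x => ?_⟩
  obtain ⟨a, hax, ha⟩ := h.exists_leaf_mem_descendants x
  by_cases hpa : p a = ρ
  · by_cases hax_eq : a = x
    · exact .inr (hax_eq ▸ hpa)
    · have hx := h.root_mem_descendants.1 (hpa ▸ parent_mem_descendants hax hax_eq)
      exact .inl (hx ▸ h.mem_descendants_root l)
  · exact .inl (hl a ha hpa ▸ hax)

end Equality

end IsRooting

section Iso

variable {G : SimpleGraph V} {H : SimpleGraph W}

lemma dist_iso (φ : G ≃g H) (x y : V) : H.dist (φ x) (φ y) = G.dist x y := by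
  rw [SimpleGraph.dist_eq_sInf, SimpleGraph.dist_eq_sInf]
  congr 1
  ext m
  constructor
  · rintro ⟨q, rfl⟩
    exact ⟨(q.map φ.symm.toHom).copy (φ.symm_apply_apply x) (φ.symm_apply_apply y), by simp⟩
  · rintro ⟨q, rfl⟩
    exact ⟨q.map φ.toHom, q.length_map _⟩

variable [Fintype V] [Fintype W]

lemma side_iso (φ : G ≃g H) (x y : V) : side H (φ x) (φ y) = side G x y :=
  (card_equiv φ.toEquiv fun z => by simp [dist_iso]).symm

lemma muE_iso (φ : G ≃g H) (e : Sym2 V) : muE H (e.map φ) = muE G e := by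
  induction e using Sym2.ind with
  | _ x y => exact congrArg₂ min (side_iso φ x y) (side_iso φ y x)

lemma r_iso (φ : G ≃g H) (i : ℕ) : r G i = r H i := by
  refine card_nbij (Sym2.map φ) (fun e he => ?_) (Sym2.map.injective φ.injective).injOn
    fun e he => ⟨e.map φ.symm, ?_, ?_⟩
  · simpa [φ.map_mem_edgeSet_iff, muE_iso] using he
  · simpa [φ.symm.map_mem_edgeSet_iff, muE_iso] using he
  · simp [Sym2.map_map]

end Iso

namespace IsRooting

section DoubleStar

variable [Fintype V] {G : SimpleGraph V} {ρ : V} {p : V → V} {d : V → ℕ}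

lemma preceq_doubleStar (h : IsRooting G ρ p d) (hne : (children p ρ).Nonempty) :
    Preceq (Fintype.card V) G (doubleStar (Fintype.card V) 1 (#(children p ρ) - 1)) := by
  intro k hk hkn
  have hΔ : #(children p ρ) ≤ Fintype.card V := card_le_univ _
  have hΔ_pos := hne.card_pos
  obtain ⟨c, hc⟩ := exists_broomRoot (b := #(children p ρ) - 1) (n := Fintype.card V) (by omega)
  rcases hk.eq_or_lt with rfl | hk
  · have hbroom := (isRooting_doubleStar hc).tailSum_one_add_one
    have := h.tailSum_one_add_one
    rw [Fintype.card_fin] at hbroom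
    omega
  · refine le_trans ?_ (le_tailSum_doubleStar hc k)
    rw [h.tailSum_eq]
    rcases (heavy ρ p k).eq_empty_or_nonempty with hempty | hheavy
    · simp [hempty]
    have := h.card_heavy_add_two_mul_le hheavy
    have := h.card_heavy_add_card_children_le hk hheavy
    omega

lemma nonempty_iso_doubleStar_of_sameEdgeDivision (h : IsRooting G ρ p d)
    (hρ : 2 < #(children p ρ))
    (hr : SameEdgeDivision (Fintype.card V) G
      (doubleStar (Fintype.card V) 1 (#(children p ρ) - 1))) :
    Nonempty (G ≃g doubleStar (Fintype.card V) 1 (#(children p ρ) - 1)) := by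
  have hΔ : #(children p ρ) < Fintype.card V :=
    card_lt_univ_of_notMem fun hρ => (mem_children.1 hρ).1 rfl
  obtain ⟨c, hc⟩ := exists_broomRoot (b := #(children p ρ) - 1) (n := Fintype.card V) (by omega)
  have hleaves : #(sizeClass ρ p 1) ≤ #(children p ρ) :=
    calc #(sizeClass ρ p 1) ≤ r G 1 := h.card_sizeClass_le_r (by omega)
      _ = r (doubleStar (Fintype.card V) 1 (#(children p ρ) - 1)) 1 := hr 1 le_rfl (by omega)
      _ ≤ #(children p ρ) - 1 + 1 := r_doubleStar_one_le hc (by omega)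
      _ = #(children p ρ) := by omega
  have htwo : #(sizeClass ρ p 2) ≤ 1 :=
    calc #(sizeClass ρ p 2) ≤ r G 2 := h.card_sizeClass_le_r (by omega)
      _ = r (doubleStar (Fintype.card V) 1 (#(children p ρ) - 1)) 2 :=
        hr 2 one_le_two (by omega)
      _ ≤ 1 := r_doubleStar_two_le_one hc (by omega)
  obtain ⟨l, hlρ, hl⟩ := h.exists_spine (card_pos.1 (by omega)) hleaves htwo
  exact h.nonempty_iso_doubleStar hlρ hl

end DoubleStar

end IsRooting

theorem stmt18_general [Fintype V] (G : SimpleGraph V) (hT : G.IsTree) (v : V)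
    (hv : 2 < deg G v) :
    Preceq (Fintype.card V) G (doubleStar (Fintype.card V) 1 (deg G v - 1)) ∧
    (SameEdgeDivision (Fintype.card V) G (doubleStar (Fintype.card V) 1 (deg G v - 1)) ↔
      Nonempty (G ≃g doubleStar (Fintype.card V) 1 (deg G v - 1))) := by
  obtain ⟨p, d, h⟩ := exists_isRooting hT v
  rw [h.deg_root] at hv ⊢
  exact ⟨h.preceq_doubleStar (card_pos.1 (by omega)),
    h.nonempty_iso_doubleStar_of_sameEdgeDivision hv, fun ⟨φ⟩ i _ _ => r_iso φ i⟩

/-- Let `T` be a tree on `n` vertices with maximum degree `Δ`, where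
`2 < Δ < n − 1`. Then `T ⪯ CP_{n;1,Δ−1}`, and `r(T) = r(CP_{n;1,Δ−1})` iff `T` is
isomorphic to `CP_{n;1,Δ−1}`. -/
theorem stmt18 {V : Type*} [Fintype V] (G : SimpleGraph V) (hT : G.IsTree) (Δ : ℕ)
    (hub : ∀ v, deg G v ≤ Δ) (hattained : ∃ v, deg G v = Δ)
    (hΔ2 : 2 < Δ) (hΔn : Δ < Fintype.card V - 1) :
    Preceq (Fintype.card V) G (doubleStar (Fintype.card V) 1 (Δ - 1)) ∧
    (SameEdgeDivision (Fintype.card V) G (doubleStar (Fintype.card V) 1 (Δ - 1)) ↔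
      Nonempty (G ≃g doubleStar (Fintype.card V) 1 (Δ - 1))) := by
  obtain ⟨v, rfl⟩ := hattained
  exact stmt18_general G hT v hΔ2

end TreeOrder
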